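/- Let d be a graph pseudometric on a set X with edge set E, let xy ∈ [X]² \ E, let r be a real number with ď(x,y) ≤ r ≤ d̂(x,y), and let D = d ∪ {⟨xy,r⟩}. Then for all u, v ∈ X such that ď(u,v) ≠ Ď(u,v), Ď(u,v) ≠ r − d̈(xy,uv), and Ď(u,v) > d̂(x,y) − 2r, we have Ď(u,v) − ď(u,v) ≤ d̂(x,y) − r and d̂(u,v) − Ď(u,v) ≥ r − ď(x,y). -/

import Mathlib

open scoped Classical

universe u

namespace GraphMetricPaper

variable {X : Type u}

/-- The vertex set `V = ⋃ E` of a graph given by an adjacency relation `E`. -/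
def Vtx (E : X → X → Prop) : Set X := {x | ∃ y, E x y}

/-- Two points are joined by a walk in the graph `E`. -/
def Joined (E : X → X → Prop) (x y : X) : Prop :=
  ∃ (n : ℕ) (c : ℕ → X), c 0 = x ∧ c n = y ∧ ∀ i, i < n → E (c i) (c (i + 1))

/-- The set of weights of walks from `x` to `y`. -/
def walkSums (E : X → X → Prop) (d : X → X → ℝ) (x y : X) : Set ℝ :=
  {s | ∃ (n : ℕ) (c : ℕ → X), c 0 = x ∧ c n = y ∧ (∀ i, i < n → E (c i) (c (i + 1))) ∧
    s = ∑ i ∈ Finset.range n, d (c i) (c (i + 1))}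

/-- The shortest-path pseudometric `d̂` determined by a weight function `d` on a graph `E`. -/
noncomputable def hatd (E : X → X → Prop) (d : X → X → ℝ) (x y : X) : ℝ :=
  sInf (walkSums E d x y)

/-- The function `ď` bounding the possible extensions of `d` from below:
`ď(x,y) = sup_{ab ∈ E} max {0, d(ab) - d̂(a,x) - d̂(y,b)}`. -/
noncomputable def checkd (E : X → X → Prop) (d : X → X → ℝ) (x y : X) : ℝ :=
  sSup ({0} ∪ {r | ∃ a b, E a b ∧ r = d a b - hatd E d a x - hatd E d y b})

/-- The pseudometric `d̈` on doubletons: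
`d̈(xy,uv) = min {d̂(x,u) + d̂(y,v), d̂(x,v) + d̂(y,u)}`. -/
noncomputable def ddot (E : X → X → Prop) (d : X → X → ℝ) (x y u v : X) : ℝ :=
  min (hatd E d x u + hatd E d y v) (hatd E d x v + hatd E d y u)

/-- `d` is a graph pseudometric with edge relation `E`:  `E` is a (symmetric, irreflexive)
connected graph, `d` is a nonnegative symmetric weight on the edges, and `d = d̂` on edges. -/
structure IsGraphPseudometric (E : X → X → Prop) (d : X → X → ℝ) : Prop where
  symm : ∀ ⦃a b⦄, E a b → E b a
  irrefl : ∀ a, ¬ E a a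
  wt_symm : ∀ ⦃a b⦄, E a b → d a b = d b a
  nonneg : ∀ ⦃a b⦄, E a b → 0 ≤ d a b
  connected : ∀ x ∈ Vtx E, ∀ y ∈ Vtx E, Joined E x y
  edge_eq : ∀ ⦃a b⦄, E a b → d a b = hatd E d a b

/-- A graph metric is a graph pseudometric with strictly positive weights. -/
def IsGraphMetric (E : X → X → Prop) (d : X → X → ℝ) : Prop :=
  IsGraphPseudometric E d ∧ ∀ ⦃a b⦄, E a b → 0 < d a b

/-- A floppy graph pseudometric: `ď(x,y) < d̂(x,y)` for every `xy ∈ [V]² \ E`. -/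
def FloppyPseudometric (E : X → X → Prop) (d : X → X → ℝ) : Prop :=
  IsGraphPseudometric E d ∧
    ∀ x ∈ Vtx E, ∀ y ∈ Vtx E, x ≠ y → ¬ E x y → checkd E d x y < hatd E d x y

/-- A floppy graph metric: `ď(x,y) < d̂(x,y)` for every `xy ∈ [V]² \ E`. -/
def FloppyMetric (E : X → X → Prop) (d : X → X → ℝ) : Prop :=
  IsGraphMetric E d ∧
    ∀ x ∈ Vtx E, ∀ y ∈ Vtx E, x ≠ y → ¬ E x y → checkd E d x y < hatd E d x y

/-- The edge relation of the one-step extension `E ∪ {xy}`. -/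
def extEdge (E : X → X → Prop) (x y : X) : X → X → Prop :=
  fun a b => E a b ∨ (a = x ∧ b = y) ∨ (a = y ∧ b = x)

/-- The weight function of the one-step extension `d ∪ {⟨xy, r⟩}`. -/
noncomputable def extWt (d : X → X → ℝ) (x y : X) (r : ℝ) : X → X → ℝ :=
  fun a b => if (a = x ∧ b = y) ∨ (a = y ∧ b = x) then r else d a b

/-- The set `[V]² \ E` of unordered pairs of distinct vertices that are not edges. -/
def nonEdgePairs (E : X → X → Prop) : Set (Sym2 X) :=
  {e | ∃ a b : X, e = s(a, b) ∧ a ≠ b ∧ a ∈ Vtx E ∧ b ∈ Vtx E ∧ ¬ E a b}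

/-- A set of (unordered) weighted pairs, presented as a relation `R`, is a full metric
on `V`: it is symmetric, its domain is exactly `[V]²`, it is single-valued, positive,
and satisfies the triangle inequality. -/
def IsFullMetricRel (V : Set X) (R : X → X → ℝ → Prop) : Prop :=
  (∀ a b r, R a b r → R b a r) ∧
  (∀ a b r, R a b r → a ∈ V ∧ b ∈ V ∧ a ≠ b) ∧
  (∀ a b, a ∈ V → b ∈ V → a ≠ b → ∃ r, R a b r) ∧
  (∀ a b r s, R a b r → R a b s → r = s) ∧
  (∀ a b r, R a b r → 0 < r) ∧
  (∀ a b c r s t, R a b r → R b c s → R a c t → t ≤ r + s)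

/-- A weight function `D` on `[V]²` is a full metric on `V`. -/
def IsFullMetricOn (V : Set X) (D : X → X → ℝ) : Prop :=
  (∀ a b, a ∈ V → b ∈ V → a ≠ b → D a b = D b a) ∧
  (∀ a b, a ∈ V → b ∈ V → a ≠ b → 0 < D a b) ∧
  (∀ a b c, a ∈ V → b ∈ V → c ∈ V → a ≠ b → b ≠ c → a ≠ c → D a c ≤ D a b + D b c)

/-- Player I has a winning strategy in the metric-extending game `Game_d(lam, Fam)`:
there are functions `S1, S2` choosing, for each inning `β < lam` and each sequence of
previous answers of player II, a legal doubleton in `[V]²` and a set from `Fam`, such that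
for every play of player II respecting the strategy, the resulting relation
`d ∪ {⟨x_α y_α, r_α⟩ : α < lam}` is a full metric on `V`. -/
def WinningStratI (V : Set X) (E : X → X → Prop) (d : X → X → ℝ)
    (lam : Ordinal.{u}) (Fam : Set (Set ℝ)) : Prop :=
  ∃ (S1 : ∀ β : Ordinal.{u}, β < lam → (∀ α : Ordinal.{u}, α < β → ℝ) → X × X)
    (S2 : ∀ β : Ordinal.{u}, β < lam → (∀ α : Ordinal.{u}, α < β → ℝ) → Set ℝ),
    (∀ β hβ s, S2 β hβ s ∈ Fam) ∧
    (∀ β hβ s, (S1 β hβ s).1 ∈ V ∧ (S1 β hβ s).2 ∈ V ∧ (S1 β hβ s).1 ≠ (S1 β hβ s).2) ∧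
    (∀ s : ∀ α : Ordinal.{u}, α < lam → ℝ,
      (∀ α (hα : α < lam), s α hα ∈ S2 α hα (fun γ hγ => s γ (hγ.trans hα))) →
      IsFullMetricRel V (fun a b r =>
        (E a b ∧ r = d a b) ∨
        ∃ α, ∃ hα : α < lam,
          ((a = (S1 α hα (fun γ hγ => s γ (hγ.trans hα))).1 ∧
            b = (S1 α hα (fun γ hγ => s γ (hγ.trans hα))).2) ∨
           (a = (S1 α hα (fun γ hγ => s γ (hγ.trans hα))).2 ∧
            b = (S1 α hα (fun γ hγ => s γ (hγ.trans hα))).1)) ∧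
          r = s α hα))

/-- Player II has a winning strategy in the metric-extending game `Game_d(lam, Fam)`:
there is a function `T` assigning to each inning `β < lam` and each sequence of moves of
player I (of length `β + 1`) an answer in the set component of the last move, such that
for every legal play of player I, the resulting relation is not a full metric on `V`. -/
def WinningStratII (V : Set X) (E : X → X → Prop) (d : X → X → ℝ)
    (lam : Ordinal.{u}) (Fam : Set (Set ℝ)) : Prop :=
  ∃ T : ∀ β : Ordinal.{u}, β < lam → (∀ α : Ordinal.{u}, α ≤ β → (X × X) × Set ℝ) → ℝ,
    (∀ β hβ p, (p β le_rfl).2 ∈ Fam → T β hβ p ∈ (p β le_rfl).2) ∧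
    (∀ p : ∀ α : Ordinal.{u}, α < lam → (X × X) × Set ℝ,
      (∀ α hα, (p α hα).1.1 ∈ V ∧ (p α hα).1.2 ∈ V ∧ (p α hα).1.1 ≠ (p α hα).1.2 ∧
        (p α hα).2 ∈ Fam) →
      ¬ IsFullMetricRel V (fun a b r =>
        (E a b ∧ r = d a b) ∨
        ∃ α, ∃ hα : α < lam,
          ((a = (p α hα).1.1 ∧ b = (p α hα).1.2) ∨
           (a = (p α hα).1.2 ∧ b = (p α hα).1.1)) ∧
          r = T α hα (fun γ hγ => p γ (lt_of_le_of_lt hγ hα))))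

/-- The edge relation of the glued graph `E_d = E_p ∪ ⋃_{f ∈ F} E_f`. -/
def gluedEdge (Ep : X → X → Prop) (F : Set ((X → X → Prop) × (X → X → ℝ))) :
    X → X → Prop :=
  fun a b => Ep a b ∨ ∃ f ∈ F, f.1 a b

/-- `Λ(v; B) = inf {d̂(a,v) + d̂(v,b) - d̂(a,b) : a, b ∈ B}`. -/
noncomputable def Lam (E : X → X → Prop) (d : X → X → ℝ) (v : X) (B : Set X) : ℝ :=
  sInf {r | ∃ a ∈ B, ∃ b ∈ B, r = hatd E d a v + hatd E d v b - hatd E d a b}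

/-- The gluing setup: a graph pseudometric `p = (Ep, wp)` and a family `F` of graph
pseudometrics such that each member meets `V_p`, agrees with `p̂` on the intersection of
the vertex sets, and distinct members only meet inside `V_p`; `wd` is the glued weight
function `d = p ∪ ⋃ F` on `E_d = E_p ∪ ⋃_{f ∈ F} E_f`. -/
structure GluingSetup (Ep : X → X → Prop) (wp : X → X → ℝ)
    (F : Set ((X → X → Prop) × (X → X → ℝ))) (wd : X → X → ℝ) : Prop where
  hp : IsGraphPseudometric Ep wp
  hF : ∀ f ∈ F, IsGraphPseudometric f.1 f.2
  meet : ∀ f ∈ F, (Vtx f.1 ∩ Vtx Ep).Nonempty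
  agree : ∀ f ∈ F, ∀ x ∈ Vtx f.1 ∩ Vtx Ep, ∀ y ∈ Vtx f.1 ∩ Vtx Ep, x ≠ y →
    hatd f.1 f.2 x y = hatd Ep wp x y
  inter_sub : ∀ f ∈ F, ∀ g ∈ F, f ≠ g → Vtx f.1 ∩ Vtx g.1 ⊆ Vtx Ep
  wd_p : ∀ ⦃a b⦄, Ep a b → wd a b = wp a b
  wd_F : ∀ f ∈ F, ∀ ⦃a b⦄, f.1 a b → wd a b = f.2 a b

/-! A shortest path in the extended graph uses the new edge at most once, so
`D̂(a,b) = min {d̂(a,b), r + d̈(xy,ab)}`. Substitute this in `D(ab) - D̂(a,u) - D̂(v,b)`.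
For an edge `ab ∈ E`, if neither distance uses `xy`, the difference is at most `ď(u,v)`; if exactly
one does, it satisfies both of the claimed estimates; and if both do, it is nonpositive.
For `ab = xy` it is at most `r - d̈(xy,uv)` or nonpositive. Since `ď(u,v)` and `r - d̈(xy,uv)` are
lower bounds for `Ď(u,v)`, when it differs from both, only the differences of the second kind
contribute to the supremum. -/

section Distance

variable {E E' : X → X → Prop} {w : X → X → ℝ} {a b c : X} {s : ℝ}

lemma Joined.mono (hE : ∀ ⦃p q⦄, E p q → E' p q) (h : Joined E a b) : Joined E' a b := by
  obtain ⟨n, p, h0, hn, hp⟩ := h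
  exact ⟨n, p, h0, hn, fun i hi => hE (hp i hi)⟩

lemma Joined.walkSums_nonempty (h : Joined E a b) (w : X → X → ℝ) :
    (walkSums E w a b).Nonempty := by
  obtain ⟨n, p, h0, hn, hp⟩ := h
  exact ⟨_, n, p, h0, hn, hp, rfl⟩

lemma zero_mem_walkSums (E : X → X → Prop) (w : X → X → ℝ) (a : X) : 0 ∈ walkSums E w a a :=
  ⟨0, fun _ => a, rfl, rfl, by simp, by simp⟩

lemma add_mem_walkSums (hs : s ∈ walkSums E w a b) (hbc : E b c) :
    s + w b c ∈ walkSums E w a c := by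
  obtain ⟨n, p, rfl, rfl, hp, rfl⟩ := hs
  have old : ∀ i ≤ n, Function.update p (n + 1) c i = p i := fun i hi =>
    Function.update_of_ne (by lia) _ _
  have new : Function.update p (n + 1) c (n + 1) = c := Function.update_self ..
  refine ⟨n + 1, Function.update p (n + 1) c, old 0 (Nat.zero_le n), new, fun i hi => ?_, ?_⟩
  · rcases Nat.lt_succ_iff_lt_or_eq.1 hi with hi | rfl
    · rw [old i hi.le, old (i + 1) hi]
      exact hp i hi
    · rwa [old i le_rfl, new]
  · rw [Finset.sum_range_succ, old n le_rfl, new]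
    congr 1
    refine Finset.sum_congr rfl fun i hi => ?_
    have hi := Finset.mem_range.1 hi
    rw [old i hi.le, old (i + 1) hi]

lemma nonneg_of_mem_walkSums (hw : ∀ ⦃p q⦄, E p q → 0 ≤ w p q) (hs : s ∈ walkSums E w a b) :
    0 ≤ s := by
  obtain ⟨n, p, -, -, hp, rfl⟩ := hs
  exact Finset.sum_nonneg fun i hi => hw (hp i (Finset.mem_range.1 hi))

lemma hatd_nonneg (hw : ∀ ⦃p q⦄, E p q → 0 ≤ w p q) (a b : X) : 0 ≤ hatd E w a b :=
  Real.sInf_nonneg fun _ => nonneg_of_mem_walkSums hw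

lemma hatd_le_of_mem_walkSums (hw : ∀ ⦃p q⦄, E p q → 0 ≤ w p q) (hs : s ∈ walkSums E w a b) :
    hatd E w a b ≤ s :=
  csInf_le ⟨0, fun _ => nonneg_of_mem_walkSums hw⟩ hs

lemma hatd_self (hw : ∀ ⦃p q⦄, E p q → 0 ≤ w p q) (a : X) : hatd E w a a = 0 :=
  (hatd_le_of_mem_walkSums hw (zero_mem_walkSums E w a)).antisymm (hatd_nonneg hw a a)

lemma hatd_le_of_edge (hw : ∀ ⦃p q⦄, E p q → 0 ≤ w p q) (hab : E a b) :
    hatd E w a b ≤ w a b := by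
  simpa only [zero_add] using
    hatd_le_of_mem_walkSums hw (add_mem_walkSums (zero_mem_walkSums E w a) hab)

lemma hatd_le_hatd_add_edge (hw : ∀ ⦃p q⦄, E p q → 0 ≤ w p q) (hj : Joined E a b) (hbc : E b c) :
    hatd E w a c ≤ hatd E w a b + w b c := by
  rw [← sub_le_iff_le_add]
  refine le_csInf (hj.walkSums_nonempty w) fun s hs => ?_
  rw [sub_le_iff_le_add]
  exact hatd_le_of_mem_walkSums hw (add_mem_walkSums hs hbc)

lemma le_hatd_of_potential (hj : Joined E a b) {f : X → ℝ} (hfa : f a ≤ 0)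
    (hf : ∀ p q, E p q → f q ≤ f p + w p q) : f b ≤ hatd E w a b := by
  refine le_csInf (hj.walkSums_nonempty w) ?_
  rintro _ ⟨n, p, rfl, rfl, hp, rfl⟩
  calc f (p n) ≤ f (p n) - f (p 0) := by linarith
    _ = ∑ i ∈ Finset.range n, (f (p (i + 1)) - f (p i)) :=
      (Finset.sum_range_sub (fun i => f (p i)) n).symm
    _ ≤ ∑ i ∈ Finset.range n, w (p i) (p (i + 1)) :=
      Finset.sum_le_sum fun i hi =>
        sub_le_iff_le_add'.2 (hf _ _ (hp i (Finset.mem_range.1 hi)))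

end Distance

/-- A symmetric graph with a nonnegative symmetric weight in which any two points of the whole type
are joined: the setting in which `d̂` is a pseudometric on that type. Graph pseudometrics and
their one-step extensions are both of this kind, but the latter need not satisfy `d = d̂` on
edges. -/
structure IsConnectedWeight (E : X → X → Prop) (w : X → X → ℝ) : Prop where
  symm : ∀ ⦃a b⦄, E a b → E b a
  wt_symm : ∀ ⦃a b⦄, E a b → w a b = w b a
  nonneg : ∀ ⦃a b⦄, E a b → 0 ≤ w a b
  joined : ∀ a b, Joined E a b

lemma IsGraphPseudometric.isConnectedWeight {E : X → X → Prop} {d : X → X → ℝ}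
    (hd : IsGraphPseudometric E d) (hvert : ∀ z, z ∈ Vtx E) : IsConnectedWeight E d where
  symm := hd.symm
  wt_symm := hd.wt_symm
  nonneg := hd.nonneg
  joined a b := hd.connected a (hvert a) b (hvert b)

namespace IsConnectedWeight

variable {E : X → X → Prop} {w : X → X → ℝ}

lemma hatd_triangle (h : IsConnectedWeight E w) (a b c : X) :
    hatd E w a c ≤ hatd E w a b + hatd E w b c := by
  have potential := le_hatd_of_potential (w := w) (h.joined b c)
    (f := fun q => hatd E w a q - hatd E w a b) (sub_self _).le fun p q hpq => by
      linarith [hatd_le_hatd_add_edge h.nonneg (h.joined a p) hpq]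
  exact sub_le_iff_le_add'.1 potential

lemma hatd_comm (h : IsConnectedWeight E w) (a b : X) : hatd E w a b = hatd E w b a := by
  have swap_le (a b : X) : hatd E w b a ≤ hatd E w a b :=
    le_hatd_of_potential (h.joined a b) (f := fun q => hatd E w q a) (hatd_self h.nonneg a).le
      fun p q hpq => by
        linarith [h.hatd_triangle q p a, hatd_le_of_edge h.nonneg (h.symm hpq), h.wt_symm hpq]
  exact (swap_le b a).antisymm (swap_le a b)

end IsConnectedWeight

section Ddot

variable {E : X → X → Prop} {w : X → X → ℝ}

lemma ddot_swap_left (E : X → X → Prop) (w : X → X → ℝ) (x y u v : X) :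
    ddot E w y x u v = ddot E w x y u v := by
  simp only [ddot, min_comm, add_comm]

lemma ddot_swap_right (E : X → X → Prop) (w : X → X → ℝ) (x y u v : X) :
    ddot E w x y v u = ddot E w x y u v :=
  min_comm _ _

lemma ddot_nonneg (hw : ∀ ⦃p q⦄, E p q → 0 ≤ w p q) (x y u v : X) : 0 ≤ ddot E w x y u v :=
  le_min (add_nonneg (hatd_nonneg hw _ _) (hatd_nonneg hw _ _))
    (add_nonneg (hatd_nonneg hw _ _) (hatd_nonneg hw _ _))

namespace IsConnectedWeight

lemma ddot_self_left (h : IsConnectedWeight E w) (x y u : X) :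
    ddot E w x y x u = hatd E w y u := by
  rw [ddot, hatd_self h.nonneg, zero_add, h.hatd_comm y x, add_comm (hatd E w x u),
    min_eq_left]
  linarith [h.hatd_triangle y x u, h.hatd_comm x y]

lemma ddot_le_ddot_add_hatd (h : IsConnectedWeight E w) (x y u v v' : X) :
    ddot E w x y u v' ≤ ddot E w x y u v + hatd E w v v' := by
  rw [ddot, ddot, ← min_add_add_right]
  exact min_le_min (by linarith [h.hatd_triangle y v v']) (by linarith [h.hatd_triangle x v v'])

lemma hatd_le_ddot_add_hatd (h : IsConnectedWeight E w) (x y u v : X) :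
    hatd E w u v ≤ ddot E w x y u v + hatd E w x y := by
  rw [ddot, ← min_add_add_right]
  refine le_min ?_ ?_
  · linarith [h.hatd_triangle u x v, h.hatd_triangle x y v, h.hatd_comm u x]
  · linarith [h.hatd_triangle u y v, h.hatd_triangle y x v, h.hatd_comm u y, h.hatd_comm x y]

lemma min_le_ddot_add_ddot (h : IsConnectedWeight E w) (x y a b u v : X) :
    min (hatd E w a b) (ddot E w x y a b) ≤ ddot E w x y a u + ddot E w x y v b := by
  have nonneg := hatd_nonneg h.nonneg
  have through_x : hatd E w a b ≤ hatd E w x a + hatd E w x b := by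
    linarith [h.hatd_triangle a x b, h.hatd_comm a x]
  have through_y : hatd E w a b ≤ hatd E w y a + hatd E w y b := by
    linarith [h.hatd_triangle a y b, h.hatd_comm a y]
  have parallel : ddot E w x y a b ≤ hatd E w x a + hatd E w y b := min_le_left _ _
  have crossed : ddot E w x y a b ≤ hatd E w x b + hatd E w y a := min_le_right _ _
  obtain hau | hau : ddot E w x y a u = hatd E w x a + hatd E w y u ∨
      ddot E w x y a u = hatd E w x u + hatd E w y a := min_choice _ _ <;>
    obtain hvb | hvb : ddot E w x y v b = hatd E w x v + hatd E w y b ∨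
      ddot E w x y v b = hatd E w x b + hatd E w y v := min_choice _ _
  · exact min_le_of_right_le (by linarith [nonneg y u, nonneg x v])
  · exact min_le_of_left_le (by linarith [nonneg y u, nonneg y v])
  · exact min_le_of_left_le (by linarith [nonneg x u, nonneg x v])
  · exact min_le_of_right_le (by linarith [nonneg x u, nonneg y v])

end IsConnectedWeight

end Ddot

section Checkd

variable {E : X → X → Prop} {w : X → X → ℝ} {u v : X} {t : ℝ}

lemma checkd_nonneg (E : X → X → Prop) (w : X → X → ℝ) (u v : X) : 0 ≤ checkd E w u v :=
  Real.sSup_nonneg' ⟨0, .inl rfl, le_rfl⟩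

lemma checkd_le (ht : 0 ≤ t) (hE : ∀ a b, E a b → w a b - hatd E w a u - hatd E w v b ≤ t) :
    checkd E w u v ≤ t := by
  refine csSup_le ⟨0, .inl rfl⟩ ?_
  rintro _ (rfl | ⟨a, b, hab, rfl⟩)
  exacts [ht, hE a b hab]

lemma le_checkd (hE : ∀ a b, E a b → w a b - hatd E w a u - hatd E w v b ≤ t) {a b : X}
    (hab : E a b) : w a b - hatd E w a u - hatd E w v b ≤ checkd E w u v := by
  refine le_csSup ⟨max 0 t, ?_⟩ (.inr ⟨a, b, hab, rfl⟩)
  rintro _ (rfl | ⟨a, b, hab, rfl⟩)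
  exacts [le_max_left _ _, le_max_of_le_right (hE a b hab)]

end Checkd

namespace IsGraphPseudometric

variable {E : X → X → Prop} {d : X → X → ℝ} {a b : X}

lemma le_checkd (hd : IsGraphPseudometric E d) (hvert : ∀ z, z ∈ Vtx E) (u v : X) (hab : E a b) :
    d a b - hatd E d a u - hatd E d v b ≤ checkd E d u v := by
  have h := hd.isConnectedWeight hvert
  refine GraphMetricPaper.le_checkd (t := hatd E d u v) (fun a b hab => ?_) hab
  linarith [hd.edge_eq hab, h.hatd_triangle a u b, h.hatd_triangle u v b]

lemma le_checkd_add_ddot (hd : IsGraphPseudometric E d) (hvert : ∀ z, z ∈ Vtx E) (x y : X)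
    (hab : E a b) : d a b ≤ checkd E d x y + ddot E d x y a b := by
  have h := hd.isConnectedWeight hvert
  rw [ddot, ← min_add_add_left]
  refine le_min ?_ ?_
  · linarith [hd.le_checkd hvert x y hab, h.hatd_comm x a]
  · linarith [hd.le_checkd hvert x y (hd.symm hab), hd.wt_symm hab, h.hatd_comm x b]

end IsGraphPseudometric

section Extension

variable {E : X → X → Prop} {d : X → X → ℝ} {x y : X} {r : ℝ}

lemma extWt_new_edge (d : X → X → ℝ) (x y : X) (r : ℝ) : extWt d x y r x y = r :=
  if_pos (.inl ⟨rfl, rfl⟩)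

lemma extWt_new_edge_symm (d : X → X → ℝ) (x y : X) (r : ℝ) : extWt d x y r y x = r :=
  if_pos (.inr ⟨rfl, rfl⟩)

namespace IsConnectedWeight

lemma extWt_of_edge (h : IsConnectedWeight E d) (hnE : ¬ E x y) (r : ℝ) {a b : X}
    (hab : E a b) : extWt d x y r a b = d a b := by
  refine if_neg ?_
  rintro (⟨rfl, rfl⟩ | ⟨rfl, rfl⟩)
  exacts [hnE hab, hnE (h.symm hab)]

lemma extend (h : IsConnectedWeight E d) (x y : X) (hr : 0 ≤ r) :
    IsConnectedWeight (extEdge E x y) (extWt d x y r) where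
  symm _ _ hab := hab.imp (@h.symm _ _) fun hnew => hnew.symm.imp And.symm And.symm
  wt_symm a b hab := by
    have new_iff : (b = x ∧ a = y) ∨ (b = y ∧ a = x) ↔ (a = x ∧ b = y) ∨ (a = y ∧ b = x) := by
      tauto
    unfold extWt
    rw [if_congr new_iff rfl rfl]
    split_ifs with hnew
    exacts [rfl, h.wt_symm (hab.resolve_right hnew)]
  nonneg a b hab := by
    unfold extWt
    split_ifs with hnew
    exacts [hr, h.nonneg (hab.resolve_right hnew)]
  joined a b := (h.joined a b).mono fun _ _ => .inl

lemma hatd_ext_le (h : IsConnectedWeight E d) (hnE : ¬ E x y) (hr : 0 ≤ r) (a b : X) :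
    hatd (extEdge E x y) (extWt d x y r) a b ≤ hatd E d a b := by
  have hext := h.extend x y hr
  refine le_hatd_of_potential (h.joined a b) (hatd_self hext.nonneg a).le fun p q hpq => ?_
  rw [← h.extWt_of_edge hnE r hpq]
  exact hatd_le_hatd_add_edge hext.nonneg (hext.joined a p) (.inl hpq)

lemma hatd_ext_le_add_ddot (h : IsConnectedWeight E d) (hnE : ¬ E x y) (hr : 0 ≤ r) (a b : X) :
    hatd (extEdge E x y) (extWt d x y r) a b ≤ r + ddot E d x y a b := by
  have hext := h.extend x y hr
  have hle := h.hatd_ext_le hnE hr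
  have new_edge : hatd (extEdge E x y) (extWt d x y r) x y ≤ r :=
    (hatd_le_of_edge hext.nonneg (.inr (.inl ⟨rfl, rfl⟩))).trans_eq (extWt_new_edge d x y r)
  rw [add_comm, ddot, ← min_add_add_right]
  refine le_min ?_ ?_
  · linarith [hext.hatd_triangle a x b, hext.hatd_triangle x y b, hle x a, hle y b,
      hext.hatd_comm a x]
  · linarith [hext.hatd_triangle a y b, hext.hatd_triangle y x b, hle y a, hle x b,
      hext.hatd_comm a y, hext.hatd_comm x y]

lemma min_hatd_add_ddot_le_add_new_edge (h : IsConnectedWeight E d) (x y : X) (hr : 0 ≤ r) (a : X) :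
    min (hatd E d a y) (r + ddot E d x y a y) ≤ min (hatd E d a x) (r + ddot E d x y a x) + r := by
  have hax : ddot E d x y a x = hatd E d a y := by
    rw [ddot_swap_right, h.ddot_self_left, h.hatd_comm]
  have hay : ddot E d x y a y = hatd E d a x := by
    rw [← ddot_swap_left, ddot_swap_right, h.ddot_self_left, h.hatd_comm]
  rw [hax, hay, ← min_add_add_right]
  refine le_min (min_le_of_right_le (add_comm _ _).le) (min_le_of_left_le ?_)
  linarith

lemma min_hatd_add_ddot_le_hatd_ext (h : IsConnectedWeight E d) (hnE : ¬ E x y) (hr : 0 ≤ r)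
    (a b : X) :
    min (hatd E d a b) (r + ddot E d x y a b) ≤ hatd (extEdge E x y) (extWt d x y r) a b := by
  refine le_hatd_of_potential ((h.extend x y hr).joined a b)
    (f := fun q => min (hatd E d a q) (r + ddot E d x y a q))
    (min_le_of_left_le (hatd_self h.nonneg a).le) ?_
  rintro p q (hpq | ⟨rfl, rfl⟩ | ⟨rfl, rfl⟩)
  · have hle := hatd_le_of_edge h.nonneg hpq
    rw [h.extWt_of_edge hnE r hpq, ← min_add_add_right]
    exact min_le_min (by linarith [h.hatd_triangle a p q])
      (by linarith [h.ddot_le_ddot_add_hatd x y a p q])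
  · rw [extWt_new_edge]
    exact h.min_hatd_add_ddot_le_add_new_edge p q hr a
  · rw [extWt_new_edge_symm]
    simpa only [ddot_swap_left] using h.min_hatd_add_ddot_le_add_new_edge p q hr a

lemma hatd_ext (h : IsConnectedWeight E d) (hnE : ¬ E x y) (hr : 0 ≤ r) (a b : X) :
    hatd (extEdge E x y) (extWt d x y r) a b = min (hatd E d a b) (r + ddot E d x y a b) :=
  (le_min (h.hatd_ext_le hnE hr a b) (h.hatd_ext_le_add_ddot hnE hr a b)).antisymm
    (h.min_hatd_add_ddot_le_hatd_ext hnE hr a b)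

lemma hatd_ext_eq_or_eq (h : IsConnectedWeight E d) (hnE : ¬ E x y) (hr : 0 ≤ r) (a b : X) :
    hatd (extEdge E x y) (extWt d x y r) a b = hatd E d a b ∨
      hatd (extEdge E x y) (extWt d x y r) a b = r + ddot E d x y a b := by
  rw [h.hatd_ext hnE hr]
  exact min_choice _ _

lemma new_edge_sub_hatd_ext_le (h : IsConnectedWeight E d) (hnE : ¬ E x y) (hr : 0 ≤ r)
    (a b u v : X) :
    r - hatd (extEdge E x y) (extWt d x y r) a u - hatd (extEdge E x y) (extWt d x y r) v b ≤
      max 0 (r - (hatd E d a u + hatd E d b v)) := by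
  have hau := hatd_nonneg (h.extend x y hr).nonneg a u
  have hvb := hatd_nonneg (h.extend x y hr).nonneg v b
  have ddot_au := ddot_nonneg h.nonneg x y a u
  have ddot_vb := ddot_nonneg h.nonneg x y v b
  rcases h.hatd_ext_eq_or_eq hnE hr a u with au_eq | au_eq <;>
    rcases h.hatd_ext_eq_or_eq hnE hr v b with vb_eq | vb_eq
  · exact le_max_of_le_right (by linarith [h.hatd_comm v b])
  all_goals exact le_max_of_le_left (by linarith)

end IsConnectedWeight

namespace IsGraphPseudometric

lemma edge_sub_hatd_ext_le (hd : IsGraphPseudometric E d) (hvert : ∀ z, z ∈ Vtx E)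
    (hnE : ¬ E x y) (hr : checkd E d x y ≤ 2 * r) (u v : X) {a b : X} (hab : E a b) :
    d a b - hatd (extEdge E x y) (extWt d x y r) a u -
        hatd (extEdge E x y) (extWt d x y r) v b ≤
      max (checkd E d u v)
        (min (checkd E d u v + (hatd E d x y - r)) (hatd E d u v - (r - checkd E d x y))) := by
  have h := hd.isConnectedWeight hvert
  have hr₀ : 0 ≤ r := by linarith [checkd_nonneg E d x y]
  have check_uv := hd.le_checkd hvert u v hab
  have check_xy := hd.le_checkd_add_ddot hvert x y hab
  rcases h.hatd_ext_eq_or_eq hnE hr₀ a u with hau | hau <;>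
    rcases h.hatd_ext_eq_or_eq hnE hr₀ v b with hvb | hvb <;>
    rw [hau, hvb]
  · exact le_max_of_le_left check_uv
  · refine le_max_of_le_right (le_min ?_ ?_)
    · linarith [h.hatd_le_ddot_add_hatd x y v b]
    · have lip_b := h.ddot_le_ddot_add_hatd x y b v a
      rw [ddot_swap_right, ddot_swap_right E d x y v b] at lip_b
      linarith [h.hatd_triangle a u v, h.hatd_comm v a]
  · refine le_max_of_le_right (le_min ?_ ?_)
    · linarith [h.hatd_le_ddot_add_hatd x y a u]
    · linarith [h.ddot_le_ddot_add_hatd x y a u b, h.hatd_triangle u v b]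
  · refine le_max_of_le_left (le_trans ?_ (checkd_nonneg E d u v))
    rcases min_le_iff.1 (h.min_le_ddot_add_ddot x y a b u v) with hle | hle
    · linarith [hd.edge_eq hab]
    · linarith

lemma ext_edge_sub_hatd_ext_le (hd : IsGraphPseudometric E d) (hvert : ∀ z, z ∈ Vtx E)
    (hnE : ¬ E x y) (hr : checkd E d x y ≤ 2 * r) (u v a b : X) (hab : extEdge E x y a b) :
    extWt d x y r a b - hatd (extEdge E x y) (extWt d x y r) a u -
        hatd (extEdge E x y) (extWt d x y r) v b ≤
      max (max (checkd E d u v) (r - ddot E d x y u v))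
        (min (checkd E d u v + (hatd E d x y - r)) (hatd E d u v - (r - checkd E d x y))) := by
  have h := hd.isConnectedWeight hvert
  have hr₀ : 0 ≤ r := by linarith [checkd_nonneg E d x y]
  rcases hab with hab | ⟨rfl, rfl⟩ | ⟨rfl, rfl⟩
  · rw [h.extWt_of_edge hnE r hab]
    exact (hd.edge_sub_hatd_ext_le hvert hnE hr u v hab).trans
      (max_le_max_right _ (le_max_left _ _))
  · rw [extWt_new_edge]
    refine le_max_of_le_left ((h.new_edge_sub_hatd_ext_le hnE hr₀ _ _ u v).trans ?_)
    exact max_le_max (checkd_nonneg E d u v) (sub_le_sub_left (min_le_left _ _) r)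
  · rw [extWt_new_edge_symm]
    refine le_max_of_le_left ((h.new_edge_sub_hatd_ext_le hnE hr₀ _ _ u v).trans ?_)
    refine max_le_max (checkd_nonneg E d u v) (sub_le_sub_left ?_ r)
    exact (min_le_right _ _).trans_eq (add_comm _ _)

lemma checkd_ext_le (hd : IsGraphPseudometric E d) (hvert : ∀ z, z ∈ Vtx E)
    (hnE : ¬ E x y) (hr : checkd E d x y ≤ 2 * r) (u v : X) :
    checkd (extEdge E x y) (extWt d x y r) u v ≤
      max (max (checkd E d u v) (r - ddot E d x y u v))
        (min (checkd E d u v + (hatd E d x y - r)) (hatd E d u v - (r - checkd E d x y))) :=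
  checkd_le (le_max_of_le_left (le_max_of_le_left (checkd_nonneg E d u v)))
    (hd.ext_edge_sub_hatd_ext_le hvert hnE hr u v)

lemma checkd_le_checkd_ext (hd : IsGraphPseudometric E d) (hvert : ∀ z, z ∈ Vtx E)
    (hnE : ¬ E x y) (hr : checkd E d x y ≤ 2 * r) (u v : X) :
    checkd E d u v ≤ checkd (extEdge E x y) (extWt d x y r) u v := by
  have h := hd.isConnectedWeight hvert
  have hr₀ : 0 ≤ r := by linarith [checkd_nonneg E d x y]
  refine checkd_le (checkd_nonneg _ _ u v) fun a b hab => ?_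
  have le_ext := GraphMetricPaper.le_checkd (hd.ext_edge_sub_hatd_ext_le hvert hnE hr u v)
    (.inl hab)
  rw [h.extWt_of_edge hnE r hab] at le_ext
  linarith [h.hatd_ext_le hnE hr₀ a u, h.hatd_ext_le hnE hr₀ v b]

lemma sub_ddot_le_checkd_ext (hd : IsGraphPseudometric E d) (hvert : ∀ z, z ∈ Vtx E)
    (hnE : ¬ E x y) (hr : checkd E d x y ≤ 2 * r) (u v : X) :
    r - ddot E d x y u v ≤ checkd (extEdge E x y) (extWt d x y r) u v := by
  have h := hd.isConnectedWeight hvert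
  have hr₀ : 0 ≤ r := by linarith [checkd_nonneg E d x y]
  have hle := h.hatd_ext_le hnE hr₀
  have bound := hd.ext_edge_sub_hatd_ext_le hvert hnE hr u v
  have le_xy := GraphMetricPaper.le_checkd bound (.inr (.inl ⟨rfl, rfl⟩))
  have le_yx := GraphMetricPaper.le_checkd bound (.inr (.inr ⟨rfl, rfl⟩))
  rw [extWt_new_edge] at le_xy
  rw [extWt_new_edge_symm] at le_yx
  rw [sub_le_comm, ddot]
  refine le_min ?_ ?_
  · linarith [hle x u, hle v y, h.hatd_comm v y]
  · linarith [hle y u, hle v x, h.hatd_comm v x]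

end IsGraphPseudometric

end Extension

theorem one_step_extension_estimates₄_general {E : X → X → Prop} {d : X → X → ℝ}
    (hd : IsGraphPseudometric E d) (hvert : ∀ z, z ∈ Vtx E) {x y : X} (hnE : ¬ E x y) {r : ℝ}
    (hr : checkd E d x y ≤ 2 * r) {u v : X}
    (hcheck : checkd E d u v ≠ checkd (extEdge E x y) (extWt d x y r) u v)
    (hddot : checkd (extEdge E x y) (extWt d x y r) u v ≠ r - ddot E d x y u v) :
    checkd (extEdge E x y) (extWt d x y r) u v - checkd E d u v ≤ hatd E d x y - r ∧
      r - checkd E d x y ≤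
        hatd E d u v - checkd (extEdge E x y) (extWt d x y r) u v := by
  have exceeds : max (checkd E d u v) (r - ddot E d x y u v) <
      checkd (extEdge E x y) (extWt d x y r) u v :=
    max_lt ((hd.checkd_le_checkd_ext hvert hnE hr u v).lt_of_ne hcheck)
      ((hd.sub_ddot_le_checkd_ext hvert hnE hr u v).lt_of_ne hddot.symm)
  have bounds := (le_max_iff.1 (hd.checkd_ext_le hvert hnE hr u v)).resolve_left exceeds.not_ge
  obtain ⟨le_add, le_sub⟩ := le_min_iff.1 bounds
  exact ⟨sub_le_iff_le_add'.2 le_add, le_sub_comm.1 le_sub⟩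

/-- With `D = d ∪ {⟨xy, r⟩}` for `ď(x,y) ≤ r ≤ d̂(x,y)`: whenever
`ď(u,v) ≠ Ď(u,v)`, `Ď(u,v) ≠ r − d̈(xy,uv)` and `Ď(u,v) > d̂(x,y) − 2r`, we have
`Ď(u,v) − ď(u,v) ≤ d̂(x,y) − r` and `d̂(u,v) − Ď(u,v) ≥ r − ď(x,y)`. -/
theorem one_step_extension_estimates₄ (E : X → X → Prop) (d : X → X → ℝ)
    (hd : IsGraphPseudometric E d) (hvert : ∀ z : X, z ∈ Vtx E)
    (x y : X) (hxy : x ≠ y) (hnE : ¬ E x y) (r : ℝ)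
    (hr₁ : checkd E d x y ≤ r) (hr₂ : r ≤ hatd E d x y) :
    ∀ u v : X,
      checkd E d u v ≠ checkd (extEdge E x y) (extWt d x y r) u v →
      checkd (extEdge E x y) (extWt d x y r) u v ≠ r - ddot E d x y u v →
      hatd E d x y - 2 * r < checkd (extEdge E x y) (extWt d x y r) u v →
      checkd (extEdge E x y) (extWt d x y r) u v - checkd E d u v ≤ hatd E d x y - r ∧
      r - checkd E d x y ≤
        hatd E d u v - checkd (extEdge E x y) (extWt d x y r) u v := by
  intro u v hcheck hddot _
  have hr : checkd E d x y ≤ 2 * r := by linarith [checkd_nonneg E d x y]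
  exact one_step_extension_estimates₄_general hd hvert hnE hr hcheck hddot

end GraphMetricPaper
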